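/- arXiv:1811.11899 — 3 statements merged into one kernel-verified Lean document; each statement's English description precedes it below -/
import Mathlib

section
/- Let p ∈ (0,1) and let F be a Lévy measure on ℝⁿ satisfying (A_F). Then for every π ∈ C₀ the function u ↦ p⁻¹((1+⟨π,u⟩)₊)^p − p⁻¹ − ⟨π,u⟩·1_{|u|≤1} is F-integrable, so that I(π) := ∫ ( p⁻¹((1+⟨π,u⟩)₊)^p − p⁻¹ − ⟨π,u⟩·1_{|u|≤1} ) F(du) is finite; moreover the map π ↦ I(π) is continuous on C₀ (with the subspace topology of ℝⁿ). -/
open MeasureTheory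
open scoped RealInnerProductSpace ENNReal
open Asymptotics Filter
open scoped Topology

/-!
Write the integrand as `g ⟪π, u⟫ - ⟪π, u⟫ 1_{‖u‖ ≤ 1}` with `g x = p⁻¹ (1 + x)₊ ^ p - p⁻¹`. Since
`g x - x = O(x²)` at `0` and `g` is continuous, compactness makes this estimate uniform on bounded
sets of `x`; as `⟪π, u⟫` is bounded for `‖u‖ ≤ 1` and bounded `π`, small jumps contribute
`O(‖u‖²)`. Large jumps contribute `O(‖u‖ ^ p)` because `g x = O((1 + |x|) ^ p)`. Both bounds are
locally uniform in `π` and `F`-integrable, so the claim follows by dominated convergence.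
-/

lemma isBigO_principal_of_isBigO_nhds_zeros {X : Type*} [TopologicalSpace X] {f g : X → ℝ}
    {K : Set X} (hK : IsCompact K) (hf : Continuous f) (hg : Continuous g)
    (hzeros : ∀ x ∈ K, g x = 0 → f =O[𝓝 x] g) : f =O[𝓟 K] g := by
  have isBigO_nhds : ∀ x ∈ K, f =O[𝓝 x] g := fun x hx => by
    by_cases hgx : g x = 0
    · exact hzeros x hx hgx
    · refine isBigO_of_div_tendsto_nhds ?_ _ (hf.continuousAt.div hg.continuousAt hgx)
      filter_upwards [hg.continuousAt.eventually_ne hgx] with y hgy hgy0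
      exact absurd hgy0 hgy
  refine hK.induction_on (p := fun s => f =O[𝓟 s] g) ?_ ?_ ?_ fun x hx => ?_
  · simp
  · exact fun s t hst ht => ht.mono (principal_mono.2 hst)
  · exact fun s t hs ht => by simpa only [sup_principal] using hs.sup ht
  · obtain ⟨C, hC⟩ := (isBigO_nhds x hx).bound
    exact ⟨_, mem_nhdsWithin_of_mem_nhds hC, isBigO_principal.2 ⟨C, fun y hy => hy⟩⟩

section CompensatedJump

variable {E : Type*} [NormedAddCommGroup E]

/-- The weight `‖u‖² ∧ 1 + ‖u‖ ^ p 1_{‖u‖ > 1}`: a measure integrates it exactly when it satisfies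
the Lévy condition and has a finite `p`-th moment away from the unit ball. -/
noncomputable def jumpWeight (p : ℝ) (u : E) : ℝ :=
  min (‖u‖ ^ 2) 1 + {u : E | 1 < ‖u‖}.indicator (fun u => ‖u‖ ^ p) u

lemma jumpWeight_of_norm_le_one {u : E} (hu : ‖u‖ ≤ 1) (p : ℝ) : jumpWeight p u = ‖u‖ ^ 2 := by
  simp [jumpWeight, hu, pow_le_one₀]

lemma norm_rpow_le_jumpWeight {u : E} (hu : 1 < ‖u‖) (p : ℝ) : ‖u‖ ^ p ≤ jumpWeight p u := by
  rw [jumpWeight, Set.indicator_of_mem (by exact hu)]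
  exact le_add_of_nonneg_left (by positivity)

lemma integrable_jumpWeight [MeasurableSpace E] [OpensMeasurableSpace E] {p : ℝ} {F : Measure E}
    (hlevy : ∫⁻ u, ENNReal.ofReal (min (‖u‖ ^ 2) 1) ∂F ≠ ⊤)
    (hmoment : ∫⁻ u in {u : E | 1 < ‖u‖}, ENNReal.ofReal (‖u‖ ^ p) ∂F ≠ ⊤) :
    Integrable (jumpWeight p) F := by
  have small : Integrable (fun u : E => min (‖u‖ ^ 2) 1) F :=
    (lintegral_ofReal_ne_top_iff_integrable
      (by fun_prop : Measurable _).aestronglyMeasurable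
      (ae_of_all _ fun u => by positivity)).1 hlevy
  have large : IntegrableOn (fun u : E => ‖u‖ ^ p) {u | 1 < ‖u‖} F :=
    (lintegral_ofReal_ne_top_iff_integrable
      (by fun_prop : Measurable _).aestronglyMeasurable
      (ae_of_all _ fun u => by positivity)).1 hmoment
  exact small.add (large.integrable_indicator (measurableSet_lt measurable_const measurable_norm))

variable [NormedSpace ℝ E]

/-- The integrand of a Lévy–Khintchine type integral: the reward `g (L u)` of a jump `u`,
compensated by its linear part `L u` when `‖u‖ ≤ 1`. The direction is a continuous functional `L`,
which is `⟪π, ·⟫` in an inner product space. -/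
noncomputable def compensatedJump (g : ℝ → ℝ) (L : StrongDual ℝ E) (u : E) : ℝ :=
  g (L u) - {u : E | ‖u‖ ≤ 1}.indicator L u

variable {g : ℝ → ℝ}

lemma measurable_compensatedJump [MeasurableSpace E] [OpensMeasurableSpace E] (hg : Measurable g)
    (L : StrongDual ℝ E) : Measurable (compensatedJump g L) :=
  (hg.comp L.continuous.measurable).sub
    (L.continuous.measurable.indicator (measurableSet_le measurable_norm measurable_const))

lemma continuous_compensatedJump_left (hg : Continuous g) (u : E) :
    Continuous fun L : StrongDual ℝ E => compensatedJump g L u := by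
  have hL : Continuous fun L : StrongDual ℝ E => L u := by fun_prop
  refine (hg.comp hL).sub ?_
  by_cases hu : ‖u‖ ≤ 1
  · simpa [Set.indicator, hu] using hL
  · simpa [Set.indicator, hu] using continuous_const

lemma exists_norm_compensatedJump_le_mul_sq (hg : Continuous g)
    (hg_zero : (fun x => g x - x) =O[𝓝 0] fun x => x ^ 2) (R : ℝ) :
    ∃ C, ∀ L : StrongDual ℝ E, ‖L‖ ≤ R → ∀ u : E, ‖u‖ ≤ 1 →
      ‖compensatedJump g L u‖ ≤ C * ‖u‖ ^ 2 := by
  have uniform : (fun x => g x - x) =O[𝓟 (Metric.closedBall 0 R)] fun x => x ^ 2 :=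
    isBigO_principal_of_isBigO_nhds_zeros (isCompact_closedBall 0 R) (by fun_prop) (by fun_prop)
      fun x _ hx => by rwa [pow_eq_zero_iff two_ne_zero |>.1 hx]
  obtain ⟨C, hC_pos, hC⟩ := uniform.exists_pos
  refine ⟨C * R ^ 2, fun L hL u hu => ?_⟩
  have hLu : ‖L u‖ ≤ R * ‖u‖ := L.le_of_opNorm_le hL u
  have hLu_mem : L u ∈ Metric.closedBall 0 R :=
    mem_closedBall_zero_iff.2 (hLu.trans (mul_le_of_le_one_right ((norm_nonneg L).trans hL) hu))
  calc ‖compensatedJump g L u‖ = ‖g (L u) - L u‖ := by simp [compensatedJump, hu]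
    _ ≤ C * ‖L u ^ 2‖ := isBigOWith_principal.1 hC _ hLu_mem
    _ = C * ‖L u‖ ^ 2 := by rw [norm_pow]
    _ ≤ C * (R * ‖u‖) ^ 2 := by gcongr
    _ = C * R ^ 2 * ‖u‖ ^ 2 := by ring

lemma exists_norm_compensatedJump_le_mul_rpow {p : ℝ} (hp : 0 ≤ p)
    (hg_growth : g =O[⊤] fun x => (1 + |x|) ^ p) (R : ℝ) :
    ∃ C, ∀ L : StrongDual ℝ E, ‖L‖ ≤ R → ∀ u : E, 1 < ‖u‖ →
      ‖compensatedJump g L u‖ ≤ C * ‖u‖ ^ p := by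
  obtain ⟨C, hC_pos, hC⟩ := hg_growth.exists_pos
  refine ⟨C * (1 + R) ^ p, fun L hL u hu => ?_⟩
  have hR : 0 ≤ R := (norm_nonneg L).trans hL
  have hLu : 1 + |L u| ≤ (1 + R) * ‖u‖ := by
    linarith [L.le_of_opNorm_le hL u, Real.norm_eq_abs (L u)]
  calc ‖compensatedJump g L u‖ = ‖g (L u)‖ := by simp [compensatedJump, hu]
    _ ≤ C * ‖(1 + |L u|) ^ p‖ := isBigOWith_top.1 hC _
    _ = C * (1 + |L u|) ^ p := by rw [Real.norm_of_nonneg (by positivity)]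
    _ ≤ C * ((1 + R) * ‖u‖) ^ p := by gcongr
    _ = C * (1 + R) ^ p * ‖u‖ ^ p := by
      rw [Real.mul_rpow (by positivity) (norm_nonneg u), mul_assoc]

lemma exists_norm_compensatedJump_le_mul_jumpWeight (hg : Continuous g)
    (hg_zero : (fun x => g x - x) =O[𝓝 0] fun x => x ^ 2) {p : ℝ} (hp : 0 ≤ p)
    (hg_growth : g =O[⊤] fun x => (1 + |x|) ^ p) (R : ℝ) :
    ∃ C, ∀ L : StrongDual ℝ E, ‖L‖ ≤ R → ∀ u : E,
      ‖compensatedJump g L u‖ ≤ C * jumpWeight p u := by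
  obtain ⟨C₁, hsmall⟩ := exists_norm_compensatedJump_le_mul_sq (E := E) hg hg_zero R
  obtain ⟨C₂, hlarge⟩ := exists_norm_compensatedJump_le_mul_rpow (E := E) hp hg_growth R
  refine ⟨max C₁ (max C₂ 0), fun L hL u => ?_⟩
  rcases le_or_gt ‖u‖ 1 with hu | hu
  · rw [jumpWeight_of_norm_le_one hu]
    exact (hsmall L hL u hu).trans (by gcongr; exact le_max_left _ _)
  · calc ‖compensatedJump g L u‖ ≤ C₂ * ‖u‖ ^ p := hlarge L hL u hu
      _ ≤ max C₁ (max C₂ 0) * jumpWeight p u := by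
        gcongr
        · exact (le_max_left _ _).trans (le_max_right _ _)
        · exact norm_rpow_le_jumpWeight hu p

variable [MeasurableSpace E] [OpensMeasurableSpace E] {F : Measure E}

lemma integrable_compensatedJump (hg : Continuous g)
    (hg_zero : (fun x => g x - x) =O[𝓝 0] fun x => x ^ 2) {p : ℝ} (hp : 0 ≤ p)
    (hg_growth : g =O[⊤] fun x => (1 + |x|) ^ p) (hF : Integrable (jumpWeight p) F)
    (L : StrongDual ℝ E) : Integrable (compensatedJump g L) F := by
  obtain ⟨C, hC⟩ :=
    exists_norm_compensatedJump_le_mul_jumpWeight (E := E) hg hg_zero hp hg_growth ‖L‖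
  exact (hF.const_mul C).mono' (measurable_compensatedJump hg.measurable L).aestronglyMeasurable
    (ae_of_all _ (hC L le_rfl))

lemma continuous_integral_compensatedJump (hg : Continuous g)
    (hg_zero : (fun x => g x - x) =O[𝓝 0] fun x => x ^ 2) {p : ℝ} (hp : 0 ≤ p)
    (hg_growth : g =O[⊤] fun x => (1 + |x|) ^ p) (hF : Integrable (jumpWeight p) F) :
    Continuous fun L : StrongDual ℝ E => ∫ u, compensatedJump g L u ∂F := by
  refine continuous_iff_continuousAt.2 fun L₀ => ?_
  obtain ⟨C, hC⟩ :=
    exists_norm_compensatedJump_le_mul_jumpWeight (E := E) hg hg_zero hp hg_growth (‖L₀‖ + 1)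
  have norm_le : ∀ᶠ L in 𝓝 L₀, ‖L‖ ≤ ‖L₀‖ + 1 :=
    continuous_norm.continuousAt.eventually_le_const (lt_add_one ‖L₀‖)
  exact continuousAt_of_dominated
    (.of_forall fun L => (measurable_compensatedJump hg.measurable L).aestronglyMeasurable)
    (norm_le.mono fun L hL => ae_of_all _ (hC L hL)) (hF.const_mul C)
    (ae_of_all _ fun u => (continuous_compensatedJump_left hg u).continuousAt)

end CompensatedJump

section PowerUtility

/-- The gain in power utility `w ↦ p⁻¹ w₊ ^ p` when the wealth `w` moves from `1` to `1 + x`. -/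
noncomputable def powerUtilityGain (p x : ℝ) : ℝ :=
  p⁻¹ * max (1 + x) 0 ^ p - p⁻¹

variable {p : ℝ}

lemma continuous_powerUtilityGain (hp : 0 ≤ p) : Continuous (powerUtilityGain p) := by
  have hpow : Continuous fun x : ℝ => max (1 + x) 0 ^ p :=
    (by fun_prop : Continuous fun x : ℝ => max (1 + x) 0).rpow_const fun _ => .inr hp
  exact (hpow.const_mul p⁻¹).sub continuous_const

lemma isBigO_powerUtilityGain_sub_self (hp : p ≠ 0) :
    (fun x => powerUtilityGain p x - x) =O[𝓝 0] fun x => x ^ 2 := by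
  have taylor : (fun x : ℝ => (1 + x) ^ p - (1 + p * x)) =O[𝓝 0] fun x => x ^ 2 := by
    simpa [FormalMultilinearSeries.partialSum, Finset.sum_range_succ, binomialSeries, mul_comm]
      using (Real.one_add_rpow_hasFPowerSeriesAt_zero (a := p)).isBigO_sub_partialSum_pow 2
  refine (taylor.const_mul_left p⁻¹).congr' ?_ .rfl
  filter_upwards [lt_mem_nhds (neg_one_lt_zero : (-1 : ℝ) < 0)] with x hx
  rw [powerUtilityGain, max_eq_left (by linarith)]
  field_simp
  ring

lemma isBigO_powerUtilityGain_one_add_abs_rpow (hp : 0 ≤ p) :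
    powerUtilityGain p =O[⊤] fun x => (1 + |x|) ^ p := by
  refine isBigO_top.2 ⟨p⁻¹, fun x => ?_⟩
  have hpow_le : max (1 + x) 0 ^ p ≤ (1 + |x|) ^ p := by
    gcongr
    exact max_le (by gcongr; exact le_abs_self x) (by positivity)
  have hone_le : 1 ≤ (1 + |x|) ^ p := Real.one_le_rpow (by simp) hp
  calc ‖powerUtilityGain p x‖ = p⁻¹ * |max (1 + x) 0 ^ p - 1| := by
        rw [powerUtilityGain, ← mul_sub_one, norm_mul, Real.norm_of_nonneg (by positivity),
          Real.norm_eq_abs]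
    _ ≤ p⁻¹ * (1 + |x|) ^ p := by
        gcongr
        exact abs_sub_le_of_nonneg_of_le (by positivity) hpow_le zero_le_one hone_le
    _ = p⁻¹ * ‖(1 + |x|) ^ p‖ := by rw [Real.norm_of_nonneg (by positivity)]

end PowerUtility

theorem integrand_integrable_and_I_continuousOn_general {E : Type*} [NormedAddCommGroup E]
    [InnerProductSpace ℝ E] [MeasurableSpace E] [OpensMeasurableSpace E] {p : ℝ} (hp : 0 < p)
    (F : Measure E) (hFlevy : ∫⁻ u, ENNReal.ofReal (min (‖u‖ ^ 2) 1) ∂F ≠ ⊤)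
    (hAF : ∫⁻ u in {u : E | 1 < ‖u‖}, ENNReal.ofReal (‖u‖ ^ p) ∂F ≠ ⊤) :
    (∀ π : E, Integrable (fun u : E =>
      p⁻¹ * (max (1 + ⟪π, u⟫) 0) ^ p - p⁻¹ -
        Set.indicator {u : E | ‖u‖ ≤ 1} (fun u => ⟪π, u⟫) u) F) ∧
    Continuous (fun π : E => ∫ u, (p⁻¹ * (max (1 + ⟪π, u⟫) 0) ^ p - p⁻¹ -
      Set.indicator {u : E | ‖u‖ ≤ 1} (fun u => ⟪π, u⟫) u) ∂F) := by
  have hF : Integrable (jumpWeight p) F := integrable_jumpWeight hFlevy hAF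
  have hcont := continuous_powerUtilityGain hp.le
  have hzero := isBigO_powerUtilityGain_sub_self hp.ne'
  have hgrowth := isBigO_powerUtilityGain_one_add_abs_rpow hp.le
  exact ⟨fun π => integrable_compensatedJump hcont hzero hp.le hgrowth hF (innerSL ℝ π),
    (continuous_integral_compensatedJump hcont hzero hp.le hgrowth hF).comp
      (innerSL ℝ).continuous⟩

/-- Let `p ∈ (0,1)` and let `F` be a Lévy measure on `ℝⁿ` satisfying `(A_F)`.
Then for every `π ∈ C₀` the function
`u ↦ p⁻¹((1+⟨π,u⟩)₊)^p − p⁻¹ − ⟨π,u⟩·1_{|u|≤1}` is `F`-integrable, and the map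
`π ↦ I(π) := ∫ (p⁻¹((1+⟨π,u⟩)₊)^p − p⁻¹ − ⟨π,u⟩·1_{|u|≤1}) dF` is continuous on `C₀`. -/
theorem integrand_integrable_and_I_continuousOn
    (n : ℕ) (hn : 1 ≤ n) (p : ℝ) (hp0 : 0 < p) (hp1 : p < 1)
    (F : Measure (EuclideanSpace ℝ (Fin n)))
    (hF0 : F {(0 : EuclideanSpace ℝ (Fin n))} = 0)
    (hFlevy : ∫⁻ u, ENNReal.ofReal (min (‖u‖ ^ (2 : ℕ)) 1) ∂F ≠ ⊤)
    (hAF : ∫⁻ u in {u : EuclideanSpace ℝ (Fin n) | 1 < ‖u‖}, ENNReal.ofReal (‖u‖ ^ p) ∂F ≠ ⊤) :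
    (∀ π ∈ {π : EuclideanSpace ℝ (Fin n) |
        F {u : EuclideanSpace ℝ (Fin n) | 1 + ⟪π, u⟫ < 0} = 0},
      Integrable (fun u : EuclideanSpace ℝ (Fin n) =>
        p⁻¹ * (max (1 + ⟪π, u⟫) 0) ^ p - p⁻¹ -
          Set.indicator {u : EuclideanSpace ℝ (Fin n) | ‖u‖ ≤ 1}
            (fun u => ⟪π, u⟫) u) F) ∧
    ContinuousOn
      (fun π : EuclideanSpace ℝ (Fin n) =>
        ∫ u, (p⁻¹ * (max (1 + ⟪π, u⟫) 0) ^ p - p⁻¹ -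
          Set.indicator {u : EuclideanSpace ℝ (Fin n) | ‖u‖ ≤ 1}
            (fun u => ⟪π, u⟫) u) ∂F)
      {π : EuclideanSpace ℝ (Fin n) |
        F {u : EuclideanSpace ℝ (Fin n) | 1 + ⟪π, u⟫ < 0} = 0} :=
  have h := integrand_integrable_and_I_continuousOn_general hp0 F hFlevy hAF
  ⟨fun π _ => h.1 π, h.2.continuousOn⟩
end

section
/- Let p < 0 and let F be a Lévy measure on ℝⁿ. Let π ∈ ℝⁿ be such that there exists ε > 0 with F({u ∈ ℝⁿ : 1 + ⟨π,u⟩ < ε}) = 0 (in particular this holds for π = λπ₀ whenever π₀ ∈ C₀ and λ ∈ [0,1), with ε = 1 − λ). Then the integrals I₁(π) := ∫_{|u|≤1} ( p⁻¹(1+⟨π,u⟩)^p − p⁻¹ − ⟨π,u⟩ ) F(du) and I₂(π) := ∫_{|u|>1} ( p⁻¹(1+⟨π,u⟩)^p − p⁻¹ ) F(du) converge absolutely, so I₁(π) and I₂(π) are finite real numbers. -/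
open MeasureTheory
open scoped RealInnerProductSpace ENNReal

/-!
Since `t ↦ p⁻¹ * t ^ p - p⁻¹` has value `0` and slope `1` at `t = 1`, and its second derivative is
bounded on `[min ε 1, ∞)`, the integrand of `I₁` is `O(⟨π, u⟩²) = O(‖u‖²)`. The integrand of `I₂`
is bounded, because `t ^ p ≤ ε ^ p` for `t ≥ ε`. A Lévy measure integrates `‖u‖²` over the unit
ball and is finite off it.
-/

theorem norm_image_sub_sub_smul_le_of_norm_deriv_deriv_le {G : Type*} [NormedAddCommGroup G]
    [NormedSpace ℝ G] {f f' f'' : ℝ → G} {s : Set ℝ} {K a b : ℝ} (hs : Convex ℝ s)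
    (hf : ∀ x ∈ s, HasDerivWithinAt f (f' x) s x) (hf' : ∀ x ∈ s, HasDerivWithinAt f' (f'' x) s x)
    (hK : ∀ x ∈ s, ‖f'' x‖ ≤ K) (ha : a ∈ s) (hb : b ∈ s) :
    ‖f b - f a - (b - a) • f' a‖ ≤ K * (b - a) ^ 2 := by
  have hK_nonneg : 0 ≤ K := (norm_nonneg _).trans (hK a ha)
  have hsub : Set.uIcc a b ⊆ s := hs.ordConnected.uIcc_subset ha hb
  have hderiv : ∀ x ∈ Set.uIcc a b,
      HasDerivWithinAt (fun x ↦ f x - x • f' a) (f' x - f' a) (Set.uIcc a b) x := fun x hx ↦ by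
    simpa using ((hf x (hsub hx)).mono hsub).fun_sub ((hasDerivWithinAt_id x _).smul_const (f' a))
  have hderiv_le : ∀ x ∈ Set.uIcc a b, ‖f' x - f' a‖ ≤ K * |b - a| := fun x hx ↦
    calc ‖f' x - f' a‖ ≤ K * |x - a| :=
          hs.norm_image_sub_le_of_norm_hasDerivWithin_le hf' hK ha (hsub hx)
      _ ≤ K * |b - a| := by gcongr K * ?_; exact Set.abs_sub_left_of_mem_uIcc hx
  calc ‖f b - f a - (b - a) • f' a‖ = ‖(f b - b • f' a) - (f a - a • f' a)‖ := by
        rw [sub_smul]; abel_nf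
    _ ≤ K * |b - a| * |b - a| :=
        (convex_uIcc a b).norm_image_sub_le_of_norm_hasDerivWithin_le hderiv hderiv_le
          Set.left_mem_uIcc Set.right_mem_uIcc
    _ = K * (b - a) ^ 2 := by rw [mul_assoc, abs_mul_abs_self, sq]

theorem abs_inv_mul_one_add_rpow_sub_inv_sub_le {p ε t : ℝ} (hp : p ≠ 0) (hp2 : p ≤ 2)
    (hε : 0 < ε) (ht : ε ≤ 1 + t) :
    |p⁻¹ * (1 + t) ^ p - p⁻¹ - t| ≤ |p - 1| * min ε 1 ^ (p - 2) * t ^ 2 := by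
  have hδ : 0 < min ε 1 := lt_min hε one_pos
  have hpos : ∀ x ∈ Set.Ici (min ε 1), 0 < x := fun x hx ↦ hδ.trans_le hx
  have hderiv : ∀ x ∈ Set.Ici (min ε 1),
      HasDerivWithinAt (fun x ↦ p⁻¹ * x ^ p) (x ^ (p - 1)) (Set.Ici (min ε 1)) x := fun x hx ↦ by
    simpa [hp] using ((Real.hasDerivAt_rpow_const (p := p)
      (Or.inl (hpos x hx).ne')).const_mul p⁻¹).hasDerivWithinAt
  have hderiv2 : ∀ x ∈ Set.Ici (min ε 1), HasDerivWithinAt (fun x ↦ x ^ (p - 1))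
      ((p - 1) * x ^ (p - 1 - 1)) (Set.Ici (min ε 1)) x := fun x hx ↦
    (Real.hasDerivAt_rpow_const (Or.inl (hpos x hx).ne')).hasDerivWithinAt
  have hderiv2_le : ∀ x ∈ Set.Ici (min ε 1),
      ‖(p - 1) * x ^ (p - 1 - 1)‖ ≤ |p - 1| * min ε 1 ^ (p - 2) := fun x hx ↦ by
    rw [norm_mul, Real.norm_eq_abs, Real.norm_of_nonneg (Real.rpow_nonneg (hpos x hx).le _),
      sub_sub, one_add_one_eq_two]
    gcongr |p - 1| * ?_
    exact Real.rpow_le_rpow_of_nonpos hδ hx (sub_nonpos.2 hp2)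
  simpa using norm_image_sub_sub_smul_le_of_norm_deriv_deriv_le (convex_Ici _) hderiv hderiv2
    hderiv2_le (min_le_right ε 1) ((min_le_left ε 1).trans ht)

theorem integrable_rpow_of_ae_le {α : Type*} [MeasurableSpace α] {μ : Measure α}
    [IsFiniteMeasure μ] {f : α → ℝ} {p ε : ℝ} (hf : AEMeasurable f μ) (hp : p ≤ 0) (hε : 0 < ε)
    (hle : ∀ᵐ x ∂μ, ε ≤ f x) : Integrable (fun x ↦ f x ^ p) μ := by
  refine Integrable.of_bound (hf.pow_const p).aestronglyMeasurable (ε ^ p) ?_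
  filter_upwards [hle] with x hx
  rw [Real.norm_of_nonneg (Real.rpow_nonneg (hε.le.trans hx) p)]
  exact Real.rpow_le_rpow_of_nonpos hε hx hp

section Levy

variable {E : Type*} [SeminormedAddCommGroup E] [MeasurableSpace E] {F : Measure E}

theorem measure_one_lt_norm_lt_top (hF : Integrable (fun u ↦ min (‖u‖ ^ 2) 1) F) :
    F {u | 1 < ‖u‖} < ∞ := by
  refine (measure_mono fun u hu ↦ ?_).trans_lt (hF.measure_ge_lt_top one_pos)
  exact le_min (one_le_pow₀ (Set.mem_ofPred.1 hu).le) le_rfl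

variable [OpensMeasurableSpace E]

theorem integrableOn_norm_sq_norm_le_one (hF : Integrable (fun u ↦ min (‖u‖ ^ 2) 1) F) :
    IntegrableOn (fun u ↦ ‖u‖ ^ 2) {u | ‖u‖ ≤ 1} F :=
  hF.integrableOn.congr_fun (fun u hu ↦ min_eq_left (pow_le_one₀ (norm_nonneg u) hu))
    (measurableSet_le continuous_norm.measurable measurable_const)

variable [NormedSpace ℝ E] {p ε : ℝ} {L : StrongDual ℝ E}

theorem integrableOn_one_add_rpow_remainder_norm_le_one (hp : p ≠ 0) (hp2 : p ≤ 2)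
    (hF : Integrable (fun u ↦ min (‖u‖ ^ 2) 1) F) (hε : 0 < ε) (hL : ∀ᵐ u ∂F, ε ≤ 1 + L u) :
    IntegrableOn (fun u ↦ p⁻¹ * (1 + L u) ^ p - p⁻¹ - L u) {u | ‖u‖ ≤ 1} F := by
  have hL_meas : Measurable L := L.continuous.measurable
  refine Integrable.mono' ((integrableOn_norm_sq_norm_le_one hF).const_mul
    (|p - 1| * min ε 1 ^ (p - 2) * ‖L‖ ^ 2)) (by fun_prop) (ae_restrict_of_ae ?_)
  filter_upwards [hL] with u hu
  calc |p⁻¹ * (1 + L u) ^ p - p⁻¹ - L u| ≤ |p - 1| * min ε 1 ^ (p - 2) * ‖L u‖ ^ 2 := by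
        simpa using abs_inv_mul_one_add_rpow_sub_inv_sub_le hp hp2 hε hu
    _ ≤ |p - 1| * min ε 1 ^ (p - 2) * (‖L‖ * ‖u‖) ^ 2 := by gcongr; exact L.le_opNorm u
    _ = |p - 1| * min ε 1 ^ (p - 2) * ‖L‖ ^ 2 * ‖u‖ ^ 2 := by ring

theorem integrableOn_one_add_rpow_one_lt_norm (hp : p ≤ 0)
    (hF : Integrable (fun u ↦ min (‖u‖ ^ 2) 1) F) (hε : 0 < ε) (hL : ∀ᵐ u ∂F, ε ≤ 1 + L u) :
    IntegrableOn (fun u ↦ (1 + L u) ^ p) {u | 1 < ‖u‖} F :=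
  have : IsFiniteMeasure (F.restrict {u | 1 < ‖u‖}) :=
    isFiniteMeasure_restrict.2 (measure_one_lt_norm_lt_top hF).ne
  integrable_rpow_of_ae_le (L.continuous.measurable.const_add 1).aemeasurable hp hε
    (ae_restrict_of_ae hL)

variable (L) in
theorem I1_I2_converge_absolutely_general (hp : p < 0)
    (hF : ∫⁻ u, ENNReal.ofReal (min (‖u‖ ^ 2) 1) ∂F ≠ ∞) (hε : 0 < ε)
    (hL : F {u | 1 + L u < ε} = 0) :
    IntegrableOn (fun u ↦ p⁻¹ * (1 + L u) ^ p - p⁻¹ - L u) {u | ‖u‖ ≤ 1} F ∧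
      IntegrableOn (fun u ↦ p⁻¹ * (1 + L u) ^ p - p⁻¹) {u | 1 < ‖u‖} F := by
  have hF_int : Integrable (fun u ↦ min (‖u‖ ^ 2) 1) F :=
    (lintegral_ofReal_ne_top_iff_integrable (by fun_prop) (.of_forall fun u ↦ by positivity)).1 hF
  have hL_ae : ∀ᵐ u ∂F, ε ≤ 1 + L u := by simpa only [ae_iff, not_le] using hL
  exact ⟨integrableOn_one_add_rpow_remainder_norm_le_one hp.ne (by linarith) hF_int hε hL_ae,
    ((integrableOn_one_add_rpow_one_lt_norm hp.le hF_int hε hL_ae).const_mul p⁻¹).sub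
      (integrableOn_const (measure_one_lt_norm_lt_top hF_int).ne)⟩

end Levy

/-- Let `p < 0` and let `F` be a Lévy measure on `ℝⁿ`. Let `π ∈ ℝⁿ` be such
that there exists `ε > 0` with `F {u | 1 + ⟨π,u⟩ < ε} = 0`. Then
`I₁(π) := ∫_{|u|≤1} (p⁻¹(1+⟨π,u⟩)^p − p⁻¹ − ⟨π,u⟩) dF` and
`I₂(π) := ∫_{|u|>1} (p⁻¹(1+⟨π,u⟩)^p − p⁻¹) dF` converge absolutely,
i.e. the integrands are integrable on the respective regions. -/
theorem I1_I2_converge_absolutely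
    (n : ℕ) (hn : 1 ≤ n) (p : ℝ) (hp : p < 0)
    (F : Measure (EuclideanSpace ℝ (Fin n)))
    (hF0 : F {(0 : EuclideanSpace ℝ (Fin n))} = 0)
    (hFlevy : ∫⁻ u, ENNReal.ofReal (min (‖u‖ ^ (2 : ℕ)) 1) ∂F ≠ ⊤)
    (π : EuclideanSpace ℝ (Fin n)) (ε : ℝ) (hε : 0 < ε)
    (hπ : F {u : EuclideanSpace ℝ (Fin n) | 1 + ⟪π, u⟫ < ε} = 0) :
    IntegrableOn
      (fun u : EuclideanSpace ℝ (Fin n) => p⁻¹ * (1 + ⟪π, u⟫) ^ p - p⁻¹ - ⟪π, u⟫)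
      {u : EuclideanSpace ℝ (Fin n) | ‖u‖ ≤ 1} F ∧
    IntegrableOn
      (fun u : EuclideanSpace ℝ (Fin n) => p⁻¹ * (1 + ⟪π, u⟫) ^ p - p⁻¹)
      {u : EuclideanSpace ℝ (Fin n) | 1 < ‖u‖} F := by
  exact I1_I2_converge_absolutely_general (innerSL ℝ π) hp hFlevy hε hπ
end

section
/- Let p ∈ (0,1), let F be a Lévy measure on ℝⁿ satisfying (A_F), let b ∈ ℝⁿ and let c be a symmetric positive semidefinite n×n real matrix. Then ψ is a closed proper convex function on ℝⁿ: ψ is convex, lower semicontinuous, ψ(π) > −∞ for all π, and ψ(0) = 0 (so ψ is finite somewhere). -/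
open MeasureTheory
open scoped RealInnerProductSpace ENNReal Topology

/-- The extended-real-valued convex function `ψ` from the paper: on the budget-constraint set
`C₀ = {π | F {u | 1 + ⟨π,u⟩ < 0} = 0}` it equals
`−⟨π,b⟩ − ((p−1)/2)⟨π,cπ⟩ − ∫ (p⁻¹((1+⟨π,u⟩)₊)^p − p⁻¹ − ⟨π,u⟩·1_{|u|≤1}) dF`,
and `+∞` outside of `C₀`. -/
noncomputable def psi (n : ℕ) (p : ℝ) (F : Measure (EuclideanSpace ℝ (Fin n)))
    (b : EuclideanSpace ℝ (Fin n))
    (c : EuclideanSpace ℝ (Fin n) →ₗ[ℝ] EuclideanSpace ℝ (Fin n))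
    (π : EuclideanSpace ℝ (Fin n)) : EReal :=
  if F {u : EuclideanSpace ℝ (Fin n) | 1 + ⟪π, u⟫ < 0} = 0 then
    (((-⟪π, b⟫) - ((p - 1) / 2) * ⟪π, c π⟫ -
      ∫ u, (p⁻¹ * (max (1 + ⟪π, u⟫) 0) ^ p - p⁻¹ -
        Set.indicator {u : EuclideanSpace ℝ (Fin n) | ‖u‖ ≤ 1}
          (fun u => ⟪π, u⟫) u) ∂F : ℝ) : EReal)
  else (⊤ : EReal)

/-!
On `C₀` the function `ψ` is real valued, so everything reduces to three facts: `C₀` is convex, `C₀`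
is closed, and the real formula for `ψ` is continuous and convex there.

A second-order Bernoulli inequality bounds the compensated power gain `p⁻¹(1+t)₊ᵖ - p⁻¹ - t` by
`p⁻¹t²`, and subadditivity of `tᵖ` bounds the uncompensated gain by `p⁻¹(1+|t|ᵖ)`. With `t = ⟨π,u⟩`,
the first bound on `|u| ≤ 1` and the second on `|u| > 1` give an `F`-integrable majorant of the
integrand, uniform for bounded `π`; dominated convergence then gives continuity. Concavity of the
integral is claimed only on `C₀`, since the truncated power `(1+t)₊ᵖ` is concave in `t ≥ -1` but not
across `t = -1`.
-/

section ExtendTop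

variable {E : Type*} {s : Set E} {f : E → ℝ}

open Classical in
/-- The extended-real-valued function that equals `f` on `s` and `+∞` off `s`, as in convex
analysis; the values of `f` off `s` are ignored. -/
noncomputable def extendTop (s : Set E) (f : E → ℝ) (x : E) : EReal :=
  if x ∈ s then (f x : EReal) else ⊤

lemma extendTop_of_mem {x : E} (hx : x ∈ s) : extendTop s f x = f x :=
  if_pos hx

lemma extendTop_of_notMem {x : E} (hx : x ∉ s) : extendTop s f x = ⊤ :=
  if_neg hx

lemma extendTop_ne_bot (x : E) : extendTop s f x ≠ ⊥ := by
  by_cases hx : x ∈ s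
  · exact (extendTop_of_mem hx).trans_ne (EReal.coe_ne_bot _)
  · exact (extendTop_of_notMem hx).trans_ne top_ne_bot

lemma coe_mul_extendTop_ne_bot {a : ℝ} (ha : 0 < a) (x : E) :
    (a : EReal) * extendTop s f x ≠ ⊥ := by
  by_cases hx : x ∈ s
  · rw [extendTop_of_mem hx, ← EReal.coe_mul]
    exact EReal.coe_ne_bot _
  · rw [extendTop_of_notMem hx, EReal.coe_mul_top_of_pos ha]
    exact top_ne_bot

lemma extendTop_combo_le [AddCommMonoid E] [Module ℝ E] (hf : ConvexOn ℝ s f) (x y : E) {a a' : ℝ}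
    (ha : 0 ≤ a) (ha' : 0 ≤ a') (haa' : a + a' = 1) :
    extendTop s f (a • x + a' • y) ≤ a * extendTop s f x + a' * extendTop s f y := by
  rcases ha.eq_or_lt with rfl | ha_pos
  · obtain rfl : a' = 1 := by linarith
    simp
  rcases ha'.eq_or_lt with rfl | ha'_pos
  · obtain rfl : a = 1 := by linarith
    simp
  by_cases hx : x ∈ s
  · by_cases hy : y ∈ s
    · rw [extendTop_of_mem hx, extendTop_of_mem hy, extendTop_of_mem (hf.1 hx hy ha ha' haa')]
      exact_mod_cast hf.2 hx hy ha ha' haa'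
    · rw [extendTop_of_notMem hy, EReal.coe_mul_top_of_pos ha'_pos,
        EReal.add_top_of_ne_bot (coe_mul_extendTop_ne_bot ha_pos x)]
      exact le_top
  · rw [extendTop_of_notMem hx, EReal.coe_mul_top_of_pos ha_pos,
      EReal.top_add_of_ne_bot (coe_mul_extendTop_ne_bot ha'_pos y)]
    exact le_top

lemma lowerSemicontinuous_extendTop [TopologicalSpace E] (hs : IsClosed s)
    (hf : LowerSemicontinuousOn f s) : LowerSemicontinuous (extendTop s f) := by
  intro x r hr
  by_cases hx : x ∈ s
  · rw [extendTop_of_mem hx] at hr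
    have hf_coe : LowerSemicontinuousOn (fun z => (f z : EReal)) s :=
      continuous_coe_real_ereal.comp_lowerSemicontinuousOn hf EReal.coe_strictMono.monotone
    filter_upwards [eventually_nhdsWithin_iff.1 (hf_coe x hx r hr)] with z hz
    by_cases hzs : z ∈ s
    · rw [extendTop_of_mem hzs]
      exact hz hzs
    · rw [extendTop_of_notMem hzs]
      exact hr.trans (EReal.coe_lt_top _)
  · rw [extendTop_of_notMem hx] at hr
    filter_upwards [hs.isOpen_compl.mem_nhds hx] with z hz
    rwa [extendTop_of_notMem hz]

end ExtendTop

section AlmostEverywhere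

variable {E Ω : Type*} [MeasurableSpace Ω] {μ : Measure Ω} {t : Ω → Set E}

lemma convex_setOf_ae_mem [AddCommMonoid E] [Module ℝ E] (ht : ∀ ω, Convex ℝ (t ω)) :
    Convex ℝ {x | ∀ᵐ ω ∂μ, x ∈ t ω} := by
  refine fun x hx y hy a a' ha ha' haa' => Set.mem_ofPred.2 ?_
  filter_upwards [hx, hy] with ω hxω hyω using ht ω hxω hyω ha ha' haa'

lemma isClosed_setOf_ae_mem [TopologicalSpace E] [SequentialSpace E] (ht : ∀ ω, IsClosed (t ω)) :
    IsClosed {x | ∀ᵐ ω ∂μ, x ∈ t ω} := by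
  refine IsSeqClosed.isClosed fun x l hx hxl => ?_
  filter_upwards [ae_all_iff.2 hx] with ω hω
  exact (ht ω).mem_of_tendsto hxl (.of_forall hω)

lemma concaveOn_integral_of_ae_mem [AddCommMonoid E] [Module ℝ E] {f : E → Ω → ℝ}
    (hf : ∀ ω, ConcaveOn ℝ (t ω) (f · ω)) (hint : ∀ x, Integrable (f x) μ) :
    ConcaveOn ℝ {x | ∀ᵐ ω ∂μ, x ∈ t ω} (fun x => ∫ ω, f x ω ∂μ) := by
  refine ⟨convex_setOf_ae_mem fun ω => (hf ω).1, fun x hx y hy a a' ha ha' haa' => ?_⟩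
  have hx_int := (hint x).const_mul a
  have hy_int := (hint y).const_mul a'
  simp only [smul_eq_mul]
  rw [← integral_const_mul, ← integral_const_mul, ← integral_add hx_int hy_int]
  refine integral_mono_ae (hx_int.add hy_int) (hint _) ?_
  filter_upwards [hx, hy] with ω hxω hyω using (hf ω).2 hxω hyω ha ha' haa'

end AlmostEverywhere

section PowerGain

variable {p : ℝ}

lemma one_add_mul_sub_mul_sq_le_rpow_one_add (hp0 : 0 < p) (hp1 : p ≤ 1) {t : ℝ}
    (ht : -1 ≤ t) :
    1 + p * t - (1 - p) * t ^ 2 ≤ (1 + t) ^ p := by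
  -- Bernoulli for the complementary exponent: `(1 + t) ^ p = (1 + t) / (1 + t) ^ (1 - p)`.
  have bernoulli : (1 + t) ^ (1 - p) ≤ 1 + (1 - p) * t :=
    rpow_one_add_le_one_add_mul_self ht (by linarith) (by linarith)
  have hden : p ≤ 1 + (1 - p) * t := by nlinarith
  refine le_of_mul_le_mul_left ?_ (hp0.trans_le hden)
  calc (1 + (1 - p) * t) * (1 + p * t - (1 - p) * t ^ 2)
      = 1 + t - (1 + (1 - p) * t - p) * ((1 - p) * t ^ 2) := by ring
    _ ≤ 1 + t := sub_le_self _ <|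
        mul_nonneg (sub_nonneg.2 hden) (mul_nonneg (sub_nonneg.2 hp1) (sq_nonneg t))
    _ = (1 + t) ^ (1 - p) * (1 + t) ^ p := by
        rw [← Real.rpow_add_of_nonneg (by linarith) (by linarith) hp0.le, sub_add_cancel,
          Real.rpow_one]
    _ ≤ (1 + (1 - p) * t) * (1 + t) ^ p :=
        mul_le_mul_of_nonneg_right bernoulli (Real.rpow_nonneg (by linarith) p)

/-- The change in power utility `p⁻¹ xᵖ` when unit wealth jumps to `1 + t`, with wealth truncated
at `0` when `t < -1`. -/
noncomputable def powerGain (p t : ℝ) : ℝ :=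
  p⁻¹ * (max (1 + t) 0) ^ p - p⁻¹

lemma powerGain_zero (p : ℝ) : powerGain p 0 = 0 := by
  simp [powerGain]

lemma continuous_powerGain (hp : 0 ≤ p) : Continuous (powerGain p) :=
  (continuous_const.mul <|
    Continuous.rpow_const (by fun_prop) fun _ => .inr hp).sub continuous_const

lemma abs_max_rpow_sub_one_sub_mul_le (hp0 : 0 < p) (hp1 : p ≤ 1) (t : ℝ) :
    |(max (1 + t) 0) ^ p - 1 - p * t| ≤ t ^ 2 := by
  rcases le_total (1 + t) 0 with ht | ht
  · rw [max_eq_right ht, Real.zero_rpow hp0.ne', abs_le]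
    constructor <;> nlinarith
  · rw [max_eq_left ht, abs_le]
    have upper := rpow_one_add_le_one_add_mul_self (by linarith : -1 ≤ t) hp0.le hp1
    have lower := one_add_mul_sub_mul_sq_le_rpow_one_add hp0 hp1 (by linarith : -1 ≤ t)
    constructor <;> nlinarith [sq_nonneg t]

lemma abs_powerGain_sub_self_le (hp0 : 0 < p) (hp1 : p ≤ 1) (t : ℝ) :
    |powerGain p t - t| ≤ p⁻¹ * t ^ 2 := by
  have factor : powerGain p t - t = p⁻¹ * ((max (1 + t) 0) ^ p - 1 - p * t) := by
    rw [powerGain]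
    field_simp
  rw [factor, abs_mul, abs_of_pos (inv_pos.2 hp0)]
  exact mul_le_mul_of_nonneg_left (abs_max_rpow_sub_one_sub_mul_le hp0 hp1 t) (inv_pos.2 hp0).le

lemma abs_powerGain_le (hp0 : 0 ≤ p) (hp1 : p ≤ 1) (t : ℝ) :
    |powerGain p t| ≤ p⁻¹ * (1 + |t| ^ p) := by
  have growth : (max (1 + t) 0) ^ p ≤ 1 + |t| ^ p :=
    calc (max (1 + t) 0) ^ p ≤ (1 + |t|) ^ p :=
          Real.rpow_le_rpow (le_max_right _ _)
            (max_le (by linarith [le_abs_self t]) (by positivity)) hp0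
      _ ≤ 1 ^ p + |t| ^ p := Real.rpow_add_le_add_rpow zero_le_one (abs_nonneg t) hp0 hp1
      _ = 1 + |t| ^ p := by rw [Real.one_rpow]
  have nonneg : 0 ≤ (max (1 + t) 0) ^ p := Real.rpow_nonneg (le_max_right _ _) p
  have factor : powerGain p t = p⁻¹ * ((max (1 + t) 0) ^ p - 1) := by rw [powerGain]; ring
  rw [factor, abs_mul, abs_of_nonneg (inv_nonneg.2 hp0)]
  refine mul_le_mul_of_nonneg_left (abs_le.2 ⟨?_, ?_⟩) (inv_nonneg.2 hp0)
  · linarith [Real.rpow_nonneg (abs_nonneg t) p]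
  · linarith

lemma concaveOn_powerGain (hp0 : 0 ≤ p) (hp1 : p ≤ 1) :
    ConcaveOn ℝ {t | 0 ≤ 1 + t} (powerGain p) := by
  have h : ConcaveOn ℝ {t : ℝ | 0 ≤ 1 + t} fun t => (1 + t) ^ p :=
    (Real.concaveOn_rpow hp0 hp1).translate_right 1
  refine ((h.smul (inv_nonneg.2 hp0)).add_const (-p⁻¹)).congr fun t ht => ?_
  simp only [powerGain, max_eq_left (Set.mem_ofPred.1 ht), smul_eq_mul, Pi.add_apply,
    sub_eq_add_neg]

end PowerGain

section JumpBound

variable {E : Type*} [NormedAddCommGroup E] {p : ℝ}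

/-- A majorant of the integrand of `ψ` valid for all portfolios with `‖π‖ ≤ R`; the two summands
control the small and the large jumps. -/
noncomputable def jumpBound (p R : ℝ) (u : E) : ℝ :=
  p⁻¹ * R ^ 2 * min (‖u‖ ^ 2) 1 +
    p⁻¹ * (1 + R ^ p) * Set.indicator {u : E | 1 < ‖u‖} (fun u => ‖u‖ ^ p) u

lemma integrable_jumpBound [MeasurableSpace E] [OpensMeasurableSpace E] {F : Measure E}
    (hsmall : Integrable (fun u => min (‖u‖ ^ 2) 1) F)
    (hlarge : IntegrableOn (fun u => ‖u‖ ^ p) {u | 1 < ‖u‖} F) (R : ℝ) :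
    Integrable (jumpBound p R) F :=
  (hsmall.const_mul _).add <|
    (hlarge.integrable_indicator (measurableSet_lt measurable_const measurable_norm)).const_mul _

end JumpBound

section JumpGain

variable {E : Type*} [NormedAddCommGroup E] [InnerProductSpace ℝ E] {p : ℝ}

/-- The integrand of `ψ`: the power gain of portfolio `π` from a jump `u` of the asset prices,
compensated by `⟨π,u⟩` for small jumps only. -/
noncomputable def jumpGain (p : ℝ) (π u : E) : ℝ :=
  powerGain p ⟪π, u⟫ - Set.indicator {u : E | ‖u‖ ≤ 1} (fun u => ⟪π, u⟫) u

lemma jumpGain_of_norm_le_one {u : E} (hu : ‖u‖ ≤ 1) (p : ℝ) (π : E) :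
    jumpGain p π u = powerGain p ⟪π, u⟫ - ⟪π, u⟫ := by
  rw [jumpGain, Set.indicator_of_mem (s := {u : E | ‖u‖ ≤ 1}) hu]

lemma jumpGain_of_one_lt_norm {u : E} (hu : 1 < ‖u‖) (p : ℝ) (π : E) :
    jumpGain p π u = powerGain p ⟪π, u⟫ := by
  rw [jumpGain, Set.indicator_of_notMem (s := {u : E | ‖u‖ ≤ 1}) hu.not_ge, sub_zero]

lemma jumpGain_zero_left (p : ℝ) (u : E) : jumpGain p 0 u = 0 := by
  simp [jumpGain, powerGain_zero]

lemma continuous_jumpGain_left (hp : 0 ≤ p) (u : E) : Continuous fun π => jumpGain p π u := by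
  have hgain : Continuous fun π : E => powerGain p ⟪π, u⟫ :=
    (continuous_powerGain hp).comp (by fun_prop)
  rcases le_or_gt ‖u‖ 1 with hu | hu
  · simp only [jumpGain_of_norm_le_one hu]
    fun_prop
  · simpa only [jumpGain_of_one_lt_norm hu] using hgain

lemma concaveOn_jumpGain_left (hp0 : 0 ≤ p) (hp1 : p ≤ 1) (u : E) :
    ConcaveOn ℝ {π : E | 0 ≤ 1 + ⟪π, u⟫} fun π => jumpGain p π u := by
  have hgain : ConcaveOn ℝ {π : E | 0 ≤ 1 + ⟪π, u⟫} fun π => powerGain p ⟪π, u⟫ :=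
    (concaveOn_powerGain hp0 hp1).comp_linearMap ((innerₗ E).flip u)
  rcases le_or_gt ‖u‖ 1 with hu | hu
  · simp only [jumpGain_of_norm_le_one hu]
    exact hgain.sub (((innerₗ E).flip u).convexOn hgain.1)
  · simpa only [jumpGain_of_one_lt_norm hu] using hgain

lemma abs_jumpGain_le_jumpBound (hp0 : 0 < p) (hp1 : p ≤ 1) {R : ℝ} {π : E} (hπ : ‖π‖ ≤ R) (u : E) :
    |jumpGain p π u| ≤ jumpBound p R u := by
  have hR : 0 ≤ R := (norm_nonneg π).trans hπ
  have hinner : |⟪π, u⟫| ≤ R * ‖u‖ :=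
    (abs_real_inner_le_norm π u).trans (mul_le_mul_of_nonneg_right hπ (norm_nonneg u))
  rcases le_or_gt ‖u‖ 1 with hu | hu
  · rw [jumpGain_of_norm_le_one hu, jumpBound, Set.indicator_of_notMem (by simpa using hu),
      min_eq_left (pow_le_one₀ (norm_nonneg u) hu), mul_zero, add_zero]
    calc |powerGain p ⟪π, u⟫ - ⟪π, u⟫| ≤ p⁻¹ * ⟪π, u⟫ ^ 2 := abs_powerGain_sub_self_le hp0 hp1 _
      _ ≤ p⁻¹ * (R * ‖u‖) ^ 2 := by rw [← sq_abs]; gcongr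
      _ = p⁻¹ * R ^ 2 * ‖u‖ ^ 2 := by ring
  · rw [jumpGain_of_one_lt_norm hu, jumpBound, Set.indicator_of_mem (s := {u : E | 1 < ‖u‖}) hu]
    have hone : 1 ≤ ‖u‖ ^ p := Real.one_le_rpow hu.le hp0.le
    calc |powerGain p ⟪π, u⟫| ≤ p⁻¹ * (1 + |⟪π, u⟫| ^ p) := abs_powerGain_le hp0.le hp1 _
      _ ≤ p⁻¹ * (‖u‖ ^ p + (R * ‖u‖) ^ p) := by gcongr
      _ = p⁻¹ * (1 + R ^ p) * ‖u‖ ^ p := by rw [Real.mul_rpow hR (norm_nonneg u)]; ring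
      _ ≤ _ := le_add_of_nonneg_left (by positivity)

lemma convexOn_inner_map_self (c : E →ₗ[ℝ] E) (hc : ∀ x, 0 ≤ ⟪x, c x⟫) :
    ConvexOn ℝ Set.univ fun x => ⟪x, c x⟫ := by
  refine ⟨convex_univ, fun x _ y _ a a' ha ha' haa' => sub_nonneg.1 ?_⟩
  have defect : a • ⟪x, c x⟫ + a' • ⟪y, c y⟫ - ⟪a • x + a' • y, c (a • x + a' • y)⟫ =
      a * a' * ⟪x - y, c (x - y)⟫ := by
    obtain rfl : a' = 1 - a := by linarith
    simp only [map_sub, map_add, map_smul, inner_add_left, inner_add_right, inner_sub_left,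
      inner_sub_right, real_inner_smul_left, real_inner_smul_right, smul_eq_mul]
    ring
  rw [defect]
  exact mul_nonneg (mul_nonneg ha ha') (hc (x - y))

variable [MeasurableSpace E]

/-- The budget-constraint set `C₀`: the portfolios under which almost no jump makes wealth
negative. -/
def budgetSet (F : Measure E) : Set E :=
  {π | F {u | 1 + ⟪π, u⟫ < 0} = 0}

lemma budgetSet_eq_setOf_ae_mem (F : Measure E) :
    budgetSet F = {π | ∀ᵐ u ∂F, π ∈ {π : E | 0 ≤ 1 + ⟪π, u⟫}} := by
  simp only [budgetSet, ae_iff, Set.mem_ofPred_eq, not_le]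

lemma zero_mem_budgetSet (F : Measure E) : 0 ∈ budgetSet F := by
  simp [budgetSet_eq_setOf_ae_mem]

lemma isClosed_budgetSet (F : Measure E) : IsClosed (budgetSet F) := by
  rw [budgetSet_eq_setOf_ae_mem]
  exact isClosed_setOf_ae_mem fun u => isClosed_le continuous_const (by fun_prop)

/-- The real-valued formula for `ψ`, over an arbitrary inner product space. Its values outside
`budgetSet F`, where `ψ` is `+∞`, are meaningless. -/
noncomputable def psiReal (p : ℝ) (F : Measure E) (b : E) (c : E →ₗ[ℝ] E) (π : E) : ℝ :=
  -⟪π, b⟫ - ((p - 1) / 2) * ⟪π, c π⟫ - ∫ u, jumpGain p π u ∂F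

lemma psiReal_zero (p : ℝ) (F : Measure E) (b : E) (c : E →ₗ[ℝ] E) : psiReal p F b c 0 = 0 := by
  simp [psiReal, jumpGain_zero_left]

variable [OpensMeasurableSpace E] {F : Measure E}

lemma measurable_jumpGain (hp : 0 ≤ p) (π : E) : Measurable (jumpGain p π) := by
  have hinner : Measurable fun u : E => ⟪π, u⟫ := Continuous.measurable (by fun_prop)
  exact ((continuous_powerGain hp).measurable.comp hinner).sub
    (hinner.indicator (measurableSet_le measurable_norm measurable_const))

lemma integrable_jumpGain (hp0 : 0 < p) (hp1 : p ≤ 1)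
    (hsmall : Integrable (fun u => min (‖u‖ ^ 2) 1) F)
    (hlarge : IntegrableOn (fun u => ‖u‖ ^ p) {u | 1 < ‖u‖} F) (π : E) :
    Integrable (jumpGain p π) F :=
  (integrable_jumpBound hsmall hlarge ‖π‖).mono' (measurable_jumpGain hp0.le π).aestronglyMeasurable
    (.of_forall (abs_jumpGain_le_jumpBound hp0 hp1 le_rfl))

lemma continuous_integral_jumpGain (hp0 : 0 < p) (hp1 : p ≤ 1)
    (hsmall : Integrable (fun u => min (‖u‖ ^ 2) 1) F)
    (hlarge : IntegrableOn (fun u => ‖u‖ ^ p) {u | 1 < ‖u‖} F) :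
    Continuous fun π => ∫ u, jumpGain p π u ∂F := by
  refine continuous_iff_continuousAt.2 fun π => continuousAt_of_dominated
    (bound := jumpBound p (‖π‖ + 1)) ?_ ?_ (integrable_jumpBound hsmall hlarge _) ?_
  · exact .of_forall fun ρ => (measurable_jumpGain hp0.le ρ).aestronglyMeasurable
  · filter_upwards [continuous_norm.continuousAt.eventually_lt_const (lt_add_one ‖π‖)] with ρ hρ
    exact .of_forall (abs_jumpGain_le_jumpBound hp0 hp1 hρ.le)
  · exact .of_forall fun u => (continuous_jumpGain_left hp0.le u).continuousAt

lemma concaveOn_integral_jumpGain (hp0 : 0 < p) (hp1 : p ≤ 1)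
    (hsmall : Integrable (fun u => min (‖u‖ ^ 2) 1) F)
    (hlarge : IntegrableOn (fun u => ‖u‖ ^ p) {u | 1 < ‖u‖} F) :
    ConcaveOn ℝ (budgetSet F) fun π => ∫ u, jumpGain p π u ∂F := by
  rw [budgetSet_eq_setOf_ae_mem]
  exact concaveOn_integral_of_ae_mem (concaveOn_jumpGain_left hp0.le hp1)
    (integrable_jumpGain hp0 hp1 hsmall hlarge)

lemma continuous_psiReal (hp0 : 0 < p) (hp1 : p ≤ 1)
    (hsmall : Integrable (fun u => min (‖u‖ ^ 2) 1) F)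
    (hlarge : IntegrableOn (fun u => ‖u‖ ^ p) {u | 1 < ‖u‖} F)
    (b : E) {c : E →ₗ[ℝ] E} (hc : Continuous c) : Continuous (psiReal p F b c) :=
  Continuous.sub (by fun_prop) (continuous_integral_jumpGain hp0 hp1 hsmall hlarge)

lemma convexOn_psiReal (hp0 : 0 < p) (hp1 : p ≤ 1)
    (hsmall : Integrable (fun u => min (‖u‖ ^ 2) 1) F)
    (hlarge : IntegrableOn (fun u => ‖u‖ ^ p) {u | 1 < ‖u‖} F)
    (b : E) {c : E →ₗ[ℝ] E} (hc : ∀ x, 0 ≤ ⟪x, c x⟫) :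
    ConvexOn ℝ (budgetSet F) (psiReal p F b c) := by
  have hjump := concaveOn_integral_jumpGain hp0 hp1 hsmall hlarge
  have hdrift : ConvexOn ℝ (budgetSet F) fun π => -⟪π, b⟫ :=
    (-(innerₗ E).flip b).convexOn hjump.1
  have hdiffusion : ConvexOn ℝ (budgetSet F) fun π => (1 - p) / 2 * ⟪π, c π⟫ :=
    ((convexOn_inner_map_self c hc).subset (Set.subset_univ _) hjump.1).smul (by linarith)
  refine ((hdrift.add hdiffusion).sub hjump).congr fun π _ => ?_
  simp only [psiReal, Pi.add_apply, Pi.sub_apply]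
  ring

theorem psi_closed_proper_convex_general (hp0 : 0 < p) (hp1 : p ≤ 1)
    (hFlevy : ∫⁻ u, ENNReal.ofReal (min (‖u‖ ^ 2) 1) ∂F ≠ ⊤)
    (hAF : ∫⁻ u in {u | 1 < ‖u‖}, ENNReal.ofReal (‖u‖ ^ p) ∂F ≠ ⊤)
    (b : E) {c : E →ₗ[ℝ] E} (hc : Continuous c) (hcpsd : ∀ x, 0 ≤ ⟪x, c x⟫) :
    (∀ x y : E, ∀ a a' : ℝ, 0 ≤ a → 0 ≤ a' → a + a' = 1 →
      extendTop (budgetSet F) (psiReal p F b c) (a • x + a' • y) ≤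
        (a : EReal) * extendTop (budgetSet F) (psiReal p F b c) x +
          (a' : EReal) * extendTop (budgetSet F) (psiReal p F b c) y) ∧
    LowerSemicontinuous (extendTop (budgetSet F) (psiReal p F b c)) ∧
    (∀ π, extendTop (budgetSet F) (psiReal p F b c) π ≠ ⊥) ∧
    extendTop (budgetSet F) (psiReal p F b c) 0 = 0 := by
  have hsmall : Integrable (fun u => min (‖u‖ ^ 2) 1) F :=
    (lintegral_ofReal_ne_top_iff_integrable (Continuous.aestronglyMeasurable (by fun_prop))
      (.of_forall fun u => by positivity)).1 hFlevy
  have hlarge : IntegrableOn (fun u => ‖u‖ ^ p) {u | 1 < ‖u‖} F :=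
    (lintegral_ofReal_ne_top_iff_integrable (measurable_norm.pow_const p).aestronglyMeasurable
      (.of_forall fun u => by positivity)).1 hAF
  have hconvex := convexOn_psiReal hp0 hp1 hsmall hlarge b hcpsd
  have hcont := continuous_psiReal hp0 hp1 hsmall hlarge b hc
  refine ⟨fun x y a a' => extendTop_combo_le hconvex x y,
    lowerSemicontinuous_extendTop (isClosed_budgetSet F)
      (hcont.lowerSemicontinuous.lowerSemicontinuousOn _),
    extendTop_ne_bot, ?_⟩
  rw [extendTop_of_mem (zero_mem_budgetSet F), psiReal_zero, EReal.coe_zero]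

end JumpGain

lemma psi_eq_extendTop (n : ℕ) (p : ℝ) (F : Measure (EuclideanSpace ℝ (Fin n)))
    (b : EuclideanSpace ℝ (Fin n))
    (c : EuclideanSpace ℝ (Fin n) →ₗ[ℝ] EuclideanSpace ℝ (Fin n)) :
    psi n p F b c = extendTop (budgetSet F) (psiReal p F b c) := by
  funext π
  by_cases hπ : π ∈ budgetSet F
  · exact (if_pos hπ).trans (extendTop_of_mem (f := psiReal p F b c) hπ).symm
  · exact (if_neg hπ).trans (extendTop_of_notMem hπ).symm

/-- Under `(A_F)`, `ψ` is a closed proper convex function on `ℝⁿ`: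
it is convex (Jensen inequality with `EReal` values), lower semicontinuous, nowhere `−∞`,
and `ψ(0) = 0` (so it is finite somewhere). -/
theorem psi_closed_proper_convex
    (n : ℕ) (hn : 1 ≤ n) (p : ℝ) (hp0 : 0 < p) (hp1 : p < 1)
    (F : Measure (EuclideanSpace ℝ (Fin n)))
    (hF0 : F {(0 : EuclideanSpace ℝ (Fin n))} = 0)
    (hFlevy : ∫⁻ u, ENNReal.ofReal (min (‖u‖ ^ (2 : ℕ)) 1) ∂F ≠ ⊤)
    (hAF : ∫⁻ u in {u : EuclideanSpace ℝ (Fin n) | 1 < ‖u‖}, ENNReal.ofReal (‖u‖ ^ p) ∂F ≠ ⊤)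
    (b : EuclideanSpace ℝ (Fin n))
    (c : EuclideanSpace ℝ (Fin n) →ₗ[ℝ] EuclideanSpace ℝ (Fin n))
    (hcsymm : ∀ x y : EuclideanSpace ℝ (Fin n), ⟪c x, y⟫ = ⟪x, c y⟫)
    (hcpsd : ∀ x : EuclideanSpace ℝ (Fin n), 0 ≤ ⟪x, c x⟫) :
    (∀ x y : EuclideanSpace ℝ (Fin n), ∀ a a' : ℝ, 0 ≤ a → 0 ≤ a' → a + a' = 1 →
      psi n p F b c (a • x + a' • y) ≤
        (a : EReal) * psi n p F b c x + (a' : EReal) * psi n p F b c y) ∧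
    LowerSemicontinuous (psi n p F b c) ∧
    (∀ π : EuclideanSpace ℝ (Fin n), psi n p F b c π ≠ ⊥) ∧
    psi n p F b c 0 = 0 := by
  rw [psi_eq_extendTop]
  exact psi_closed_proper_convex_general hp0 hp1.le hFlevy hAF b
    c.continuous_of_finiteDimensional hcpsd
end
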